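/- Let A ∈ ℝ^{n×d} have full column rank, let b ∈ ℝⁿ, let ε ∈ (0,1), and suppose y' ∈ ℝ^d satisfies ‖Ay' − b‖₂ ≤ (1+ε)·min_{y ∈ ℝ^d} ‖Ay − b‖₂. Then ‖y'‖₂ ≤ 2√ε · σ_min(A)^{-1} · min_{y ∈ ℝ^d} ‖Ay − b‖₂ + σ_min(A)^{-1} · ‖b‖₂. -/

import Mathlib

open Matrix
open scoped BigOperators

/-- The Euclidean (`ℓ₂`) norm of a vector in `ℝ^n`. -/
noncomputable def vnorm {n : ℕ} (v : Fin n → ℝ) : ℝ :=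
  Real.sqrt (∑ i, v i ^ 2)

/-- The minimum singular value `σ_min(A) = min_{‖x‖₂ = 1} ‖Ax‖₂`. -/
noncomputable def sigmaMin {n d : ℕ} (A : Matrix (Fin n) (Fin d) ℝ) : ℝ :=
  sInf {c : ℝ | ∃ x : Fin d → ℝ, vnorm x = 1 ∧ c = vnorm (A.mulVec x)}

/-- The maximum singular value (spectral / operator norm)
`σ_max(A) = ‖A‖ = max_{‖x‖₂ = 1} ‖Ax‖₂`. -/
noncomputable def sigmaMax {n d : ℕ} (A : Matrix (Fin n) (Fin d) ℝ) : ℝ :=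
  sSup {c : ℝ | ∃ x : Fin d → ℝ, vnorm x = 1 ∧ c = vnorm (A.mulVec x)}

/-- The condition number `κ(A) = σ_max(A) / σ_min(A)`. -/
noncomputable def kappa {n d : ℕ} (A : Matrix (Fin n) (Fin d) ℝ) : ℝ :=
  sigmaMax A / sigmaMin A

theorem vnorm_eq_norm {n : ℕ} (v : Fin n → ℝ) : vnorm v = ‖(WithLp.toLp 2 v : EuclideanSpace ℝ (Fin n))‖ := by
  simp [vnorm, EuclideanSpace.norm_eq]

theorem exists_antilip {n d : ℕ} (A : Matrix (Fin n) (Fin d) ℝ) (hrank : A.rank = d) :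
    ∃ K : ℝ, 0 < K ∧ ∀ x : Fin d → ℝ, vnorm x ≤ K * vnorm (A.mulVec x) := by
  have hker : LinearMap.ker A.mulVecLin = ⊥ := by
    have h := LinearMap.finrank_range_add_finrank_ker A.mulVecLin
    rw [Module.finrank_fin_fun] at h
    have h2 : Module.finrank ℝ (LinearMap.range A.mulVecLin) = d := hrank
    exact Submodule.finrank_eq_zero.mp (by omega)
  have hinj : LinearMap.ker (Matrix.toEuclideanLin A) = ⊥ := by
    rw [LinearMap.ker_eq_bot'] at hker ⊢
    intro x hx
    have := hker (WithLp.ofLp x) (by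
      have := congrArg WithLp.ofLp hx
      simpa using this)
    ext i
    exact congrFun this i
  obtain ⟨K, hK, h⟩ := LinearMap.exists_antilipschitzWith _ hinj
  refine ⟨K, hK, fun x => ?_⟩
  have := h.le_mul_dist (WithLp.toLp 2 x) 0
  simpa [vnorm_eq_norm, dist_eq_norm] using this

theorem exists_proj {n d : ℕ} (A : Matrix (Fin n) (Fin d) ℝ) (b : Fin n → ℝ) :
    ∃ z : Fin d → ℝ, vnorm (A.mulVec z) ≤ vnorm b ∧ ∀ y : Fin d → ℝ,
      vnorm (A.mulVec y - b) ^ 2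
        = vnorm (A.mulVec y - A.mulVec z) ^ 2 + vnorm (A.mulVec z - b) ^ 2 := by
  set L := Matrix.toEuclideanLin A with hL
  set B : EuclideanSpace ℝ (Fin n) := WithLp.toLp 2 b with hB
  obtain ⟨z, hz⟩ := ((LinearMap.range L).starProjection_apply_mem B)
  have hz' : (WithLp.toLp 2 (A.mulVec (WithLp.ofLp z)) : EuclideanSpace ℝ (Fin n)) = L z := rfl
  refine ⟨WithLp.ofLp z, ?_, fun y => ?_⟩
  · rw [vnorm_eq_norm, vnorm_eq_norm, hz', hz]
    exact (LinearMap.range L).norm_starProjection_apply_le B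
  · have hy' : (WithLp.toLp 2 (A.mulVec y) : EuclideanSpace ℝ (Fin n)) = L (WithLp.toLp 2 y) := rfl
    simp only [vnorm_eq_norm, WithLp.toLp_sub, hz', hy']
    have ho := (LinearMap.range L).starProjection_inner_eq_zero B (L (WithLp.toLp 2 y) - L z)
      (by rw [← map_sub]; exact LinearMap.mem_range_self _ _)
    rw [← hz, real_inner_comm] at ho
    have e : L (WithLp.toLp 2 y) - B = (L (WithLp.toLp 2 y) - L z) - (B - L z) := by abel
    rw [← hB, e, norm_sub_sq_real, ho, norm_sub_rev (L z) B]
    ring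

/-- Norm bound on an approximate least-squares solution: if `A` has full
column rank and `y'` is a `(1+ε)`-approximate minimizer of `‖Ay - b‖₂`, then
`‖y'‖₂ ≤ 2√ε·σ_min(A)⁻¹·min_y ‖Ay - b‖₂ + σ_min(A)⁻¹·‖b‖₂`. -/
theorem approx_least_squares_solution_norm {n d : ℕ} (A : Matrix (Fin n) (Fin d) ℝ)
    (hrank : A.rank = d) (b : Fin n → ℝ) (ε : ℝ) (hε : ε ∈ Set.Ioo (0 : ℝ) 1)
    (y' : Fin d → ℝ)
    (hy : vnorm (A.mulVec y' - b)
        ≤ (1 + ε) * sInf {c : ℝ | ∃ y : Fin d → ℝ, c = vnorm (A.mulVec y - b)}) :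
    vnorm y'
      ≤ 2 * Real.sqrt ε * (sigmaMin A)⁻¹
          * sInf {c : ℝ | ∃ y : Fin d → ℝ, c = vnorm (A.mulVec y - b)}
        + (sigmaMin A)⁻¹ * vnorm b := by
  obtain ⟨hε0, hε1⟩ := hε
  obtain ⟨z, hzb, hz⟩ := exists_proj A b
  have nn : ∀ {k : ℕ} (v : Fin k → ℝ), 0 ≤ vnorm v := fun v => Real.sqrt_nonneg _
  have hm : sInf {c : ℝ | ∃ y : Fin d → ℝ, c = vnorm (A.mulVec y - b)}
      = vnorm (A.mulVec z - b) := by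
    apply IsLeast.csInf_eq
    refine ⟨⟨z, rfl⟩, ?_⟩
    rintro c ⟨y, rfl⟩
    refine abs_le_of_sq_le_sq' ?_ (nn _) |>.2
    rw [hz y]
    nlinarith [sq_nonneg (vnorm (A.mulVec y - A.mulVec z))]
  rw [hm] at hy ⊢
  set m := vnorm (A.mulVec z - b) with hmdef
  have hm0 : 0 ≤ m := nn _
  have h1 : vnorm (A.mulVec y' - A.mulVec z) ≤ 2 * Real.sqrt ε * m := by
    refine abs_le_of_sq_le_sq' ?_ (by positivity) |>.2
    have h2 : vnorm (A.mulVec y' - b) ^ 2 ≤ ((1 + ε) * m) ^ 2 := by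
      have := nn (A.mulVec y' - b)
      gcongr
    have h3 : (2 * Real.sqrt ε * m) ^ 2 = 4 * ε * m ^ 2 := by
      rw [mul_pow, mul_pow, Real.sq_sqrt hε0.le]; ring
    rw [hz y'] at h2
    rw [h3]
    have h4 : ε ^ 2 * m ^ 2 ≤ ε * m ^ 2 := by
      gcongr; nlinarith
    nlinarith [mul_nonneg hε0.le (sq_nonneg m)]
  have h5 : vnorm (A.mulVec y') ≤ 2 * Real.sqrt ε * m + vnorm b := by
    have : vnorm (A.mulVec y') ≤ vnorm (A.mulVec y' - A.mulVec z) + vnorm (A.mulVec z) := by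
      simp only [vnorm_eq_norm, WithLp.toLp_sub]
      exact norm_le_norm_sub_add _ _
    linarith
  have smul_norm : ∀ {k : ℕ} (c : ℝ) (v : Fin k → ℝ), vnorm (c • v) = |c| * vnorm v := by
    intro k c v
    simp only [vnorm_eq_norm, WithLp.toLp_smul, norm_smul, Real.norm_eq_abs]
  by_cases h0 : vnorm y' = 0
  · have hs : 0 ≤ sigmaMin A := by
      apply Real.sInf_nonneg
      rintro c ⟨x, _, rfl⟩
      exact nn _
    have := nn b
    rw [h0]
    positivity
  have hpos : 0 < vnorm y' := lt_of_le_of_ne (nn _) (Ne.symm h0)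
  have hunit : vnorm ((vnorm y')⁻¹ • y') = 1 := by
    rw [smul_norm, abs_of_pos (inv_pos.mpr hpos), inv_mul_cancel₀ h0]
  obtain ⟨K, hK, hKx⟩ := exists_antilip A hrank
  have hspos : 0 < sigmaMin A := by
    refine lt_of_lt_of_le (inv_pos.mpr hK) (le_csInf ⟨_, _, hunit, rfl⟩ ?_)
    rintro c ⟨x, hx, rfl⟩
    have := hKx x
    rw [hx] at this
    rwa [inv_le_iff_one_le_mul₀' hK]
  have hle : sigmaMin A ≤ (vnorm y')⁻¹ * vnorm (A.mulVec y') := by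
    refine csInf_le ⟨0, ?_⟩ ⟨_, hunit, ?_⟩
    · rintro c ⟨x, _, rfl⟩
      exact nn _
    · rw [Matrix.mulVec_smul, smul_norm, abs_of_pos (inv_pos.mpr hpos)]
  rw [inv_mul_eq_div, le_div_iff₀ hpos] at hle
  have : vnorm y' ≤ (sigmaMin A)⁻¹ * (2 * Real.sqrt ε * m + vnorm b) := by
    rw [inv_mul_eq_div, le_div_iff₀ hspos]
    linarith
  linarith
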